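/- Every countable sofic group Γ satisfies Lück's determinant conjecture: the canonical trace τ_Γ (τ_Γ(x) = 1 if x = 1, and 0 otherwise) satisfies Lück's condition, i.e. for every n ≥ 1 and every a ∈ M_n(ℤΓ), (τ_Γ ⊗ Tr_n)(ln_+|a|) ≥ 0. -/

import Mathlib

open scoped ComplexOrder ENNReal
open Filter Topology Matrix

set_option synthInstance.maxHeartbeats 1000000
set_option maxHeartbeats 1000000

noncomputable section

instance piLpCompleteSpace {ι : Type*} [Fintype ι] (p : ℝ≥0∞) (β : ι → Type*)
    [∀ i, UniformSpace (β i)] [∀ i, CompleteSpace (β i)] : CompleteSpace (PiLp p β) :=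
  inferInstance

/-- `φ : G → ℂ` is of positive type: for every finite family `g₁, …, g_m` of elements of
`G`, the matrix `(φ (gᵢ⁻¹ gⱼ))_{i,j}` is positive semidefinite. -/
def IsPosType {G : Type*} [Group G] (φ : G → ℂ) : Prop :=
  ∀ (m : ℕ) (g : Fin m → G), (Matrix.of fun i j => φ ((g i)⁻¹ * g j)).PosSemidef

/-- A trace on a (discrete) group: a function of positive type, constant on conjugacy
classes. -/
def IsGroupTrace {G : Type*} [Group G] (φ : G → ℂ) : Prop :=
  IsPosType φ ∧ ∀ g h : G, φ (h * g * h⁻¹) = φ g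

/-- GNS representation data for a function `φ` on a group `G`: a Hilbert space `H`, a
unital algebra morphism `π` from `ℂG = MonoidAlgebra ℂ G` to the bounded operators on `H`
sending group elements to unitaries (this is the condition `star_of`), and a cyclic vector
`ξ` whose matrix coefficient is (the linear extension of) `φ`. -/
structure GNSRep (G : Type*) [Group G] (φ : G → ℂ) where
  H : Type
  [instNormed : NormedAddCommGroup H]
  [instInner : InnerProductSpace ℂ H]
  [instComplete : CompleteSpace H]
  π : MonoidAlgebra ℂ G →ₐ[ℂ] (H →L[ℂ] H)
  ξ : H
  star_of : ∀ g : G, star (π (MonoidAlgebra.of ℂ G g)) = π (MonoidAlgebra.of ℂ G g⁻¹)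
  inner_eq : ∀ g : G, (inner ℂ ξ (π (MonoidAlgebra.of ℂ G g) ξ) : ℂ) = φ g
  cyclic : Dense (Set.range fun x : MonoidAlgebra ℂ G => π x ξ)

attribute [instance] GNSRep.instNormed GNSRep.instInner GNSRep.instComplete

/-- The vector `ξᵢ ∈ Hⁿ`: the cyclic vector `ξ` in the `i`-th summand, `0` elsewhere. -/
def GNSRep.vec {G : Type*} [Group G] {φ : G → ℂ} (R : GNSRep G φ) {n : ℕ} (i : Fin n) :
    PiLp 2 (fun _ : Fin n => R.H) :=
  (PiLp.continuousLinearEquiv 2 ℂ (fun _ : Fin n => R.H)).symm (Pi.single i R.ξ)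

/-- `|x| = (x* x)^{1/2}`, via the continuous functional calculus. -/
def cfcAbs {A : Type*} [CStarAlgebra A] (x : A) : A := cfc Real.sqrt (star x * x)

/-- The set of continuous majorants of `ln₊` on `[0,∞)`.  (Recall that `Real.log 0 = 0`,
so that `Real.log` agrees with `ln₊` on `[0,∞)`.) -/
def lnPlusMajorants : Set (ℝ → ℝ) :=
  {g | ContinuousOn g (Set.Ici 0) ∧ ∀ t ∈ Set.Ici (0:ℝ), Real.log t ≤ g t}

/-- The action of a matrix `a ∈ Mₙ(R)` on the Hilbert space `H'ⁿ` (with its `ℓ²` inner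
product) induced by a morphism `π : R → B(H')`: `(π_n(a) v)_i = Σ_j π(a i j) (v j)`. -/
def matAct {R H' : Type*} [Ring R] [Algebra ℂ R] [NormedAddCommGroup H']
    [InnerProductSpace ℂ H'] {n : ℕ}
    (π : R →ₐ[ℂ] (H' →L[ℂ] H')) (a : Matrix (Fin n) (Fin n) R) :
    PiLp 2 (fun _ : Fin n => H') →L[ℂ] PiLp 2 (fun _ : Fin n => H') :=
  (PiLp.continuousLinearEquiv 2 ℂ _).symm.toContinuousLinearMap ∘L
    (ContinuousLinearMap.pi fun i => ∑ j, (π (a i j)).comp (ContinuousLinearMap.proj j)) ∘L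
    (PiLp.continuousLinearEquiv 2 ℂ _).toContinuousLinearMap

/-- `(φ ⊗ Trₙ)(ln₊ |a|) := inf { Σᵢ ⟨ξᵢ, g(|π(a)|) ξᵢ⟩ : g : [0,∞) → ℝ continuous, g ≥ ln₊ }`,
an element of `ℝ ∪ {−∞}`, computed in the GNS representation `R`. -/
def GNSRep.lnPlusQ {G : Type*} [Group G] {φ : G → ℂ} (R : GNSRep G φ) {n : ℕ}
    (a : Matrix (Fin n) (Fin n) (MonoidAlgebra ℂ G)) : EReal :=
  ⨅ g ∈ lnPlusMajorants,
    ((∑ i, (inner ℂ (R.vec i) (cfc g (cfcAbs (matAct R.π a)) (R.vec i)) : ℂ)).re : EReal)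

/-- A function `φ` on `G` satisfies Lück's condition if `(φ ⊗ Trₙ)(ln₊|a|) ≥ 0` for every
`n ≥ 1` and every `a ∈ Mₙ(ℤG)` (an `a ∈ Mₙ(ℂG)` whose coefficients are all integers),
where the quantity is computed in any GNS representation of `φ`. -/
def SatisfiesLueck {G : Type*} [Group G] (φ : G → ℂ) : Prop :=
  ∀ (n : ℕ), 0 < n → ∀ a : Matrix (Fin n) (Fin n) (MonoidAlgebra ℂ G),
    (∀ (i j : Fin n) (g : G), ∃ m : ℤ, (a i j).coeff g = (m : ℂ)) →
    ∀ R : GNSRep G φ, 0 ≤ R.lnPlusQ a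

/-- `τ_k(σ) = card {x | σ x = x} / k`, the fixed-point ratio of a permutation. -/
def permFixRatio {k : ℕ} (σ : Equiv.Perm (Fin k)) : ℝ :=
  (Finset.univ.filter fun x => σ x = x).card / k

/-- `δ_k(σ₁, σ₂) = card {x | σ₁ x ≠ σ₂ x} / k`, the normalized Hamming distance. -/
def permHamming {k : ℕ} (σ₁ σ₂ : Equiv.Perm (Fin k)) : ℝ :=
  (Finset.univ.filter fun x => σ₁ x ≠ σ₂ x).card / k

/-- A group `Γ` is sofic: there are maps `f_n : Γ → S_{k_n}` (not necessarily
homomorphisms) which are asymptotically multiplicative and asymptotically free. -/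
def IsSofic (Γ : Type*) [Group Γ] : Prop :=
  ∃ (k : ℕ → ℕ) (f : ∀ n, Γ → Equiv.Perm (Fin (k n))),
    (∀ n, 0 < k n) ∧
    (∀ x y : Γ, Tendsto (fun n => permHamming (f n x * f n y) (f n (x * y))) atTop (𝓝 0)) ∧
    (∀ x : Γ, x ≠ 1 → Tendsto (fun n => permHamming (f n x) 1) atTop (𝓝 1))

open Classical in
/-- The canonical trace on a group: `τ_Γ(x) = 1` if `x = 1` and `0` otherwise. -/
def canonicalTrace (Γ : Type*) [Group Γ] : Γ → ℂ := fun x => if x = 1 then 1 else 0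

/-!
Let `q : F → Γ` be the evaluation map of the free group `F` on the underlying set of `Γ`. Sofic
approximations `f n : Γ → S_{k n}` extend to homomorphisms `F → S_{k n}` whose normalized characters
converge pointwise to `τ_Γ ∘ q`. Lück's condition passes from `τ_Γ ∘ q` to `τ_Γ`, because a GNS
representation of `τ_Γ` is also one of `τ_Γ ∘ q` and matrices over `ℤΓ` lift to `ℤF`.

For a limit of permutation characters, `a ∈ Mₙ(ℤF)` acts by an integer matrix `A`. The product of
the nonzero eigenvalues of `A* A` is, up to sign, the lowest nonzero coefficient of an integer
polynomial, hence at least `1`, so `Tr p(A* A) ≥ 0` for every polynomial `p ≥ ½ ln` on an interval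
`[0, K]` containing the spectrum. Here `K` can be chosen independently of the permutations, since
`‖A* A‖` is at most the sum of the absolute values of the coefficients of `a* a`. The inequality
therefore survives in the limit, and a continuous `g ≥ ln₊` is reached by approximating `g(√t)`
uniformly from above by such polynomials `p`.
-/

section IntegerSpectrum

open Polynomial

variable {𝕜 : Type*} [RCLike 𝕜]

theorem sum_log_norm_roots_nonneg_of_coeff_zero_ne_zero {P : ℤ[X]} (hP : P.Monic)
    (h0 : P.coeff 0 ≠ 0) (hs : (P.map (Int.castRingHom 𝕜)).Splits) :
    0 ≤ ((P.map (Int.castRingHom 𝕜)).roots.map fun z => Real.log ‖z‖).sum := by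
  set roots := (P.map (Int.castRingHom 𝕜)).roots
  have hprod : ‖roots.prod‖ = |(P.coeff 0 : ℝ)| := by
    have hcoeff := congrArg norm (hs.coeff_zero_eq_prod_roots_of_monic (hP.map _))
    rw [coeff_map, eq_intCast, norm_mul, norm_pow, norm_neg, norm_one, one_pow, one_mul] at hcoeff
    rw [← hcoeff, ← RCLike.ofReal_intCast, RCLike.norm_ofReal]
  have hne : ∀ z ∈ roots, ‖z‖ ≠ 0 := fun z hz => by
    rw [norm_ne_zero_iff]
    rintro rfl
    refine h0 (Int.cast_injective (α := 𝕜) ?_)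
    simpa [IsRoot, ← coeff_zero_eq_eval_zero] using isRoot_of_mem_roots hz
  calc
    0 ≤ Real.log |(P.coeff 0 : ℝ)| := Real.log_nonneg (by exact_mod_cast Int.one_le_abs h0)
    _ = (roots.map fun z => Real.log ‖z‖).sum := by
      rw [← hprod, ← normHom_apply, map_multiset_prod, Real.log_multiset_prod (by simpa using hne),
        Multiset.map_map]
      rfl

theorem sum_log_norm_roots_nonneg {P : ℤ[X]} (hP : P.Monic)
    (hs : (P.map (Int.castRingHom 𝕜)).Splits) :
    0 ≤ ((P.map (Int.castRingHom 𝕜)).roots.map fun z => Real.log ‖z‖).sum := by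
  obtain ⟨Q, hPQ, hQ⟩ := P.exists_eq_pow_rootMultiplicity_mul_and_not_dvd hP.ne_zero 0
  rw [C_0, sub_zero] at hPQ hQ
  have hQmonic : Q.Monic := (monic_X_pow _).of_mul_monic_left (hPQ ▸ hP)
  have hmap : P.map (Int.castRingHom 𝕜) =
      X ^ P.rootMultiplicity 0 * Q.map (Int.castRingHom 𝕜) := by
    conv_lhs => rw [hPQ]
    rw [Polynomial.map_mul, Polynomial.map_pow, map_X]
  have hne : X ^ P.rootMultiplicity 0 * Q.map (Int.castRingHom 𝕜) ≠ 0 :=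
    hmap ▸ (hP.map _).ne_zero
  have hQ0 := sum_log_norm_roots_nonneg_of_coeff_zero_ne_zero (𝕜 := 𝕜) hQmonic
    (fun h => hQ (X_dvd_iff.2 h)) (hs.of_dvd (hP.map _).ne_zero (hmap ▸ dvd_mul_left _ _))
  rw [hmap, roots_mul hne, roots_X_pow, Multiset.map_add, Multiset.sum_add,
    Multiset.map_nsmul, Multiset.sum_nsmul]
  simpa using hQ0

variable {ι : Type*} [Fintype ι] [DecidableEq ι]

theorem sum_log_eigenvalues_nonneg (B : Matrix ι ι ℤ)
    (hB : (B.map (Int.cast : ℤ → 𝕜)).IsHermitian) : 0 ≤ ∑ i, Real.log (hB.eigenvalues i) := by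
  have hcharpoly : B.charpoly.map (Int.castRingHom 𝕜) = (B.map (Int.cast : ℤ → 𝕜)).charpoly :=
    (B.charpoly_map (Int.castRingHom 𝕜)).symm
  have hroots := sum_log_norm_roots_nonneg (𝕜 := 𝕜) B.charpoly_monic
    (hcharpoly ▸ hB.splits_charpoly)
  rw [hcharpoly, hB.roots_charpoly_eq_eigenvalues, Multiset.map_map] at hroots
  simpa [Function.comp_def] using hroots

theorem trace_aeval_eq_sum_eval_eigenvalues {B : Matrix ι ι 𝕜} (hB : B.IsHermitian) (p : ℝ[X]) :
    (aeval B p).trace = ∑ i, ((p.eval (hB.eigenvalues i) : ℝ) : 𝕜) := by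
  rw [← cfc_polynomial p B hB.isSelfAdjoint, hB.cfc_eq, IsHermitian.cfc,
    Unitary.conjStarAlgAut_apply, Matrix.trace_mul_cycle]
  simp [Matrix.trace_diagonal]

open scoped Matrix.Norms.Operator

theorem abs_eigenvalues_le_norm {B : Matrix ι ι 𝕜} (hB : B.IsHermitian) (i : ι) :
    |hB.eigenvalues i| ≤ ‖B‖ := by
  have : Nonempty ι := ⟨i⟩
  have : NormOneClass (Matrix ι ι 𝕜) := Matrix.linfty_opNormOneClass
  have : CompleteSpace (Matrix ι ι 𝕜) := FiniteDimensional.complete 𝕜 _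
  exact spectrum.norm_le_norm_of_mem (hB.eigenvalues_mem_spectrum_real i)

theorem re_trace_aeval_conjTranspose_mul_self_nonneg (A : Matrix ι ι ℤ) {K : ℝ}
    (hK : ‖(A.map (Int.cast : ℤ → 𝕜))ᴴ * A.map (Int.cast : ℤ → 𝕜)‖ ≤ K) {p : ℝ[X]}
    (hp : ∀ t ∈ Set.Icc 0 K, Real.log t / 2 ≤ p.eval t) :
    0 ≤ RCLike.re
      (aeval ((A.map (Int.cast : ℤ → 𝕜))ᴴ * A.map (Int.cast : ℤ → 𝕜)) p).trace := by
  have hmap : (Aᵀ * A).map (Int.cast : ℤ → 𝕜) =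
      (A.map (Int.cast : ℤ → 𝕜))ᴴ * A.map (Int.cast : ℤ → 𝕜) := by
    ext i j
    simp [Matrix.mul_apply]
  rw [← hmap] at hK ⊢
  have hpsd : ((Aᵀ * A).map (Int.cast : ℤ → 𝕜)).PosSemidef :=
    hmap ▸ posSemidef_conjTranspose_mul_self _
  rw [trace_aeval_eq_sum_eval_eigenvalues hpsd.isHermitian, ← RCLike.ofReal_sum, RCLike.ofReal_re]
  calc
    0 ≤ (∑ i, Real.log (hpsd.isHermitian.eigenvalues i)) / 2 :=
      div_nonneg (sum_log_eigenvalues_nonneg _ hpsd.isHermitian) zero_le_two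
    _ = ∑ i, Real.log (hpsd.isHermitian.eigenvalues i) / 2 := Finset.sum_div _ _ _
    _ ≤ ∑ i, p.eval (hpsd.isHermitian.eigenvalues i) := Finset.sum_le_sum fun i _ =>
      hp _ ⟨hpsd.eigenvalues_nonneg i,
        (le_abs_self _).trans ((abs_eigenvalues_le_norm hpsd.isHermitian i).trans hK)⟩

end IntegerSpectrum

section FunctionalCalculus

open Polynomial

variable {A : Type*} [CStarAlgebra A]

theorem cfc_mem_closure_aeval_majorants {b : A} (hb : IsSelfAdjoint b) {α β : ℝ}
    (hspec : spectrum ℝ b ⊆ Set.Icc α β) {f : ℝ → ℝ} (hf : ContinuousOn f (Set.Icc α β)) :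
    cfc f b ∈ closure (aeval b '' {p : ℝ[X] | ∀ t ∈ Set.Icc α β, f t ≤ p.eval t}) := by
  refine Metric.mem_closure_iff.2 fun ε hε => ?_
  obtain ⟨p, hp⟩ := exists_polynomial_near_of_continuousOn α β f hf (ε / 3) (by positivity)
  refine ⟨_, ⟨p + C (ε / 3), fun t ht => ?_, rfl⟩, ?_⟩
  · rw [eval_add, eval_C]
    linarith [(abs_lt.1 (hp t ht)).1]
  · rw [← cfc_polynomial _ b hb, dist_eq_norm,
      ← cfc_sub f (p + C (ε / 3)).eval b (hf.mono hspec) (by fun_prop)]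
    refine (norm_cfc_le (c := 2 * ε / 3) (by positivity) fun t ht => ?_).trans_lt (by linarith)
    have hpt := abs_lt.1 (hp t (hspec ht))
    rw [eval_add, eval_C, Real.norm_eq_abs, abs_le]
    constructor <;> linarith

theorem cfc_cfcAbs {g : ℝ → ℝ} (hg : ContinuousOn g (Set.Ici 0)) (x : A) :
    cfc g (cfcAbs x) = cfc (g ∘ Real.sqrt) (star x * x) := by
  refine (cfc_comp g Real.sqrt (star x * x) (.star_mul_self x) (hg.mono ?_) (by fun_prop)).symm
  rintro _ ⟨t, -, rfl⟩
  exact Real.sqrt_nonneg t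

theorem spectrum_star_mul_self_subset_Icc (x : A) :
    spectrum ℝ (star x * x) ⊆ Set.Icc 0 ‖star x * x‖ := by
  nontriviality A
  exact fun t ht => ⟨spectrum_star_mul_self_nonneg t ht,
    (le_abs_self t).trans (spectrum.norm_le_norm_of_mem ht)⟩

end FunctionalCalculus

section GroupAlgebra

variable {k G A : Type*} [CommSemiring k] [StarRing k] [Group G]

/-- The involution `(∑ z_g g)* = ∑ (star z_g) g⁻¹` of a group algebra. Only the operation is
recorded, which is all that `Matrix.conjTranspose` needs. -/
instance groupAlgebraStar : Star (MonoidAlgebra k G) where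
  star := MonoidAlgebra.liftNC
    ((MonoidAlgebra.singleOneRingHom : k →+* MonoidAlgebra k G).toAddMonoidHom.comp
      (starAddEquiv : k ≃+ k).toAddMonoidHom)
    fun g => MonoidAlgebra.of k G g⁻¹

theorem groupAlgebra_star_single (g : G) (z : k) :
    star (MonoidAlgebra.single g z) = MonoidAlgebra.single g⁻¹ (star z) := by
  simp [star, MonoidAlgebra.single_mul_single]

theorem groupAlgebra_star_add (x y : MonoidAlgebra k G) : star (x + y) = star x + star y :=
  map_add (MonoidAlgebra.liftNC _ _) x y

theorem groupAlgebra_star_zero : star (0 : MonoidAlgebra k G) = 0 :=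
  map_zero (MonoidAlgebra.liftNC _ _)

theorem map_groupAlgebra_star [Semiring A] [StarRing A] [Algebra k A] [StarModule k A]
    (π : MonoidAlgebra k G →ₐ[k] A)
    (hπ : ∀ g, star (π (MonoidAlgebra.of k G g)) = π (MonoidAlgebra.of k G g⁻¹))
    (x : MonoidAlgebra k G) : π (star x) = star (π x) := by
  have hsingle (g : G) (z : k) : π (MonoidAlgebra.single g z) = z • π (MonoidAlgebra.of k G g) := by
    rw [← map_smul, MonoidAlgebra.of_apply, MonoidAlgebra.smul_single, smul_eq_mul, mul_one]
  induction x using MonoidAlgebra.induction_linear with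
  | zero => rw [groupAlgebra_star_zero, map_zero, star_zero]
  | add x y hx hy => rw [groupAlgebra_star_add, map_add, map_add, star_add, hx, hy]
  | single g z => rw [groupAlgebra_star_single, hsingle, hsingle, star_smul, hπ]

end GroupAlgebra

section MatrixTrace

variable {G m : Type*} [Fintype m]

/-- `(φ ⊗ Tr)(c)` for a matrix `c` over the group algebra, where `φ` is extended linearly. -/
def matTrace (φ : G → ℂ) (c : Matrix m m (MonoidAlgebra ℂ G)) : ℂ :=
  ∑ i, (c i i).coeff.sum fun g z => z * φ g

theorem tendsto_matTrace {α : Type*} {l : Filter α} {φ : α → G → ℂ} {φ₀ : G → ℂ}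
    (h : ∀ g, Tendsto (fun s => φ s g) l (𝓝 (φ₀ g))) (c : Matrix m m (MonoidAlgebra ℂ G)) :
    Tendsto (fun s => matTrace (φ s) c) l (𝓝 (matTrace φ₀ c)) :=
  tendsto_finsetSum _ fun _ _ => tendsto_finsetSum _ fun g _ => (h g).const_mul _

end MatrixTrace

section MatrixAction

variable {R H : Type*} [Ring R] [Algebra ℂ R] [NormedAddCommGroup H] [InnerProductSpace ℂ H] {n : ℕ}
  (π : R →ₐ[ℂ] (H →L[ℂ] H))

theorem matAct_apply (a : Matrix (Fin n) (Fin n) R) (v : PiLp 2 fun _ : Fin n => H) (i : Fin n) :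
    matAct π a v i = ∑ j, π (a i j) (v j) := by
  simp [matAct]

/-- `matAct` as a morphism of algebras. -/
def matActAlgHom : Matrix (Fin n) (Fin n) R →ₐ[ℂ]
    ((PiLp 2 fun _ : Fin n => H) →L[ℂ] PiLp 2 fun _ : Fin n => H) :=
  AlgHom.ofLinearMap
    { toFun := matAct π
      map_add' := fun a b => by
        ext v i
        simp [matAct_apply, Finset.sum_add_distrib]
      map_smul' := fun z a => by
        ext v i
        simp [matAct_apply, Finset.smul_sum] }
    (by
      ext v i
      simp [matAct_apply, Matrix.one_apply, apply_ite π, apply_ite DFunLike.coe, ite_apply])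
    (fun a b => by
      ext v i
      simp only [LinearMap.coe_mk, AddHom.coe_mk, mul_apply_eq_comp, matAct_apply,
        Matrix.mul_apply, map_sum, map_mul, _root_.sum_apply]
      exact Finset.sum_comm)

theorem matAct_mul (a b : Matrix (Fin n) (Fin n) R) :
    matAct π (a * b) = matAct π a * matAct π b :=
  map_mul (matActAlgHom π) a b

theorem matAct_aeval (a : Matrix (Fin n) (Fin n) R) (p : Polynomial ℝ) :
    matAct π (Polynomial.aeval a p) = Polynomial.aeval (matAct π a) p :=
  (Polynomial.aeval_algHom_apply ((matActAlgHom π).restrictScalars ℝ) a p).symm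

theorem matAct_conjTranspose [CompleteSpace H] [Star R] (hπ : ∀ x, π (star x) = star (π x))
    (a : Matrix (Fin n) (Fin n) R) : matAct π aᴴ = star (matAct π a) := by
  rw [ContinuousLinearMap.star_eq_adjoint, ContinuousLinearMap.eq_adjoint_iff]
  intro v w
  simp only [PiLp.inner_apply, matAct_apply, sum_inner, inner_sum, Matrix.conjTranspose_apply, hπ,
    ContinuousLinearMap.star_eq_adjoint, ContinuousLinearMap.adjoint_inner_left]
  exact Finset.sum_comm

end MatrixAction

section GNS

variable {G : Type*} [Group G] {φ : G → ℂ} (R : GNSRep G φ) {n : ℕ}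

theorem GNSRep.π_star (x : MonoidAlgebra ℂ G) : R.π (star x) = star (R.π x) :=
  map_groupAlgebra_star R.π R.star_of x

theorem GNSRep.inner_π (x : MonoidAlgebra ℂ G) :
    inner ℂ R.ξ (R.π x R.ξ) = x.coeff.sum fun g z => z * φ g := by
  have hx : R.π x = x.coeff.sum fun g z => z • R.π (MonoidAlgebra.of ℂ G g) := by
    rw [MonoidAlgebra.lift_unique' R.π, MonoidAlgebra.lift_apply]
    simp
  simp only [hx, Finsupp.sum, _root_.sum_apply, _root_.smul_apply, inner_sum, inner_smul_right,
    R.inner_eq]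

/-- The functional `T ↦ ∑ᵢ ⟨ξᵢ, T ξᵢ⟩` on the bounded operators of `Hⁿ`; on the image of
`Mₙ(ℂG)` it is `φ ⊗ Trₙ`. -/
def GNSRep.vecTrace
    (T : (PiLp 2 fun _ : Fin n => R.H) →L[ℂ] PiLp 2 fun _ : Fin n => R.H) : ℂ :=
  ∑ i, inner ℂ (R.vec i) (T (R.vec i))

theorem GNSRep.continuous_vecTrace : Continuous (R.vecTrace (n := n)) := by
  unfold GNSRep.vecTrace
  fun_prop

theorem GNSRep.vecTrace_matAct (c : Matrix (Fin n) (Fin n) (MonoidAlgebra ℂ G)) :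
    R.vecTrace (matAct R.π c) = matTrace φ c := by
  have hvec (i j : Fin n) : R.vec i j = if j = i then R.ξ else 0 := Pi.single_apply i R.ξ j
  refine Finset.sum_congr rfl fun i _ => ?_
  rw [← R.inner_π, PiLp.inner_apply,
    Finset.sum_eq_single i (fun j _ hj => by simp [hvec, hj]) (by simp)]
  simp [matAct_apply, hvec, apply_ite]

end GNS

section BlockMatrixNorm

open scoped Matrix.Norms.Operator

variable {ι m α : Type*} [Fintype ι] [Fintype m] [NormedAddCommGroup α]

theorem nnnorm_comp_le (M : Matrix m m (Matrix ι ι α)) :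
    ‖Matrix.comp m m ι ι α M‖₊ ≤ ∑ i, ∑ j, ‖M i j‖₊ := by
  rw [Matrix.linfty_opNNNorm_def]
  refine Finset.sup_le fun ⟨i, s⟩ _ => ?_
  calc
    ∑ t, ‖Matrix.comp m m ι ι α M (i, s) t‖₊ = ∑ j, ∑ t, ‖M i j s t‖₊ := Fintype.sum_prod_type _
    _ ≤ ∑ j, ‖M i j‖₊ := Finset.sum_le_sum fun j _ => by
      rw [Matrix.linfty_opNNNorm_def]
      exact Finset.le_sup (f := fun s => ∑ t, ‖M i j s t‖₊) (Finset.mem_univ s)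
    _ ≤ ∑ i, ∑ j, ‖M i j‖₊ :=
      Finset.single_le_sum (f := fun i => ∑ j, ‖M i j‖₊) (fun _ _ => zero_le) (Finset.mem_univ i)

end BlockMatrixNorm

section PermutationRepresentation

variable {G ι m : Type*} [Group G] [Fintype ι] [DecidableEq ι] [Fintype m] [DecidableEq m]

/-- The permutation representation `ℂG → M_ι(ℂ)` of an action of `G` on `ι`. -/
def permRep (f : G →* Equiv.Perm ι) : MonoidAlgebra ℂ G →ₐ[ℂ] Matrix ι ι ℂ :=
  MonoidAlgebra.lift ℂ _ G (Matrix.permMatrixHom.comp f)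

/-- The amplification `M_m(ℂG) → M_{m × ι}(ℂ)` of `permRep`. -/
def permMatRep (f : G →* Equiv.Perm ι) :
    Matrix m m (MonoidAlgebra ℂ G) →ₐ[ℂ] Matrix (m × ι) (m × ι) ℂ :=
  (Matrix.compAlgEquiv m ι ℂ ℂ).toAlgHom.comp (permRep f).mapMatrix

theorem permRep_apply (f : G →* Equiv.Perm ι) (x : MonoidAlgebra ℂ G) :
    permRep f x = x.coeff.sum fun g z => z • (f g)⁻¹.permMatrix ℂ :=
  MonoidAlgebra.lift_apply _ x

theorem permMatRep_apply (f : G →* Equiv.Perm ι) (a : Matrix m m (MonoidAlgebra ℂ G))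
    (i j : m) (s t : ι) : permMatRep f a (i, s) (j, t) = permRep f (a i j) s t :=
  rfl

theorem permRep_star (f : G →* Equiv.Perm ι) (x : MonoidAlgebra ℂ G) :
    permRep f (star x) = star (permRep f x) :=
  map_groupAlgebra_star _ (fun g => by simp [permRep, Matrix.star_eq_conjTranspose]) x

theorem permMatRep_conjTranspose (f : G →* Equiv.Perm ι) (a : Matrix m m (MonoidAlgebra ℂ G)) :
    permMatRep f aᴴ = (permMatRep f a)ᴴ := by
  ext ⟨i, s⟩ ⟨j, t⟩
  rw [permMatRep_apply, Matrix.conjTranspose_apply, permRep_star]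
  rfl

/-- Membership of `x ∈ ℂG` in `ℤG`. -/
def HasIntCoeffs {G : Type*} (x : MonoidAlgebra ℂ G) : Prop :=
  ∀ g, ∃ z : ℤ, x.coeff g = z

theorem HasIntCoeffs.exists_permRep_apply_eq {x : MonoidAlgebra ℂ G} (hx : HasIntCoeffs x)
    (f : G →* Equiv.Perm ι) (s t : ι) : ∃ z : ℤ, permRep f x s t = z := by
  suffices permRep f x s t ∈ (Int.castRingHom ℂ).range from this.imp fun _ => Eq.symm
  rw [permRep_apply, Finsupp.sum, Matrix.sum_apply]
  refine sum_mem fun g _ => mul_mem ?_ ?_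
  · exact (hx g).imp fun _ => Eq.symm
  · rw [Equiv.Perm.permMatrix, PEquiv.toMatrix_apply]
    split_ifs
    exacts [one_mem _, zero_mem _]

theorem exists_permMatRep_eq_map_intCast {a : Matrix m m (MonoidAlgebra ℂ G)}
    (ha : ∀ i j, HasIntCoeffs (a i j)) (f : G →* Equiv.Perm ι) :
    ∃ A : Matrix (m × ι) (m × ι) ℤ, permMatRep f a = A.map Int.cast := by
  choose A hA using fun i j => (ha i j).exists_permRep_apply_eq f
  exact ⟨fun s t => A s.1 t.1 s.2 t.2, Matrix.ext fun s t => hA s.1 t.1 s.2 t.2⟩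

theorem trace_permRep_div_card {k : ℕ} (f : G →* Equiv.Perm (Fin k)) (x : MonoidAlgebra ℂ G) :
    (permRep f x).trace / k = x.coeff.sum fun g z => z * permFixRatio (f g) := by
  have hperm (σ : Equiv.Perm (Fin k)) : (σ⁻¹.permMatrix ℂ).trace / k = permFixRatio σ := by
    rw [← Matrix.transpose_permMatrix, Matrix.trace_transpose, Matrix.trace_permutation,
      permFixRatio, ← Set.ncard_coe_finset]
    push_cast
    simp [Function.fixedPoints, Function.IsFixedPt]
  simp only [permRep_apply, Finsupp.sum, Matrix.trace_sum, Matrix.trace_smul, Finset.sum_div,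
    smul_eq_mul, mul_div_assoc, hperm]

theorem matTrace_permFixRatio {k : ℕ} (f : G →* Equiv.Perm (Fin k))
    (c : Matrix m m (MonoidAlgebra ℂ G)) :
    matTrace (fun g => (permFixRatio (f g) : ℂ)) c = (permMatRep f c).trace / k := by
  have htrace : (permMatRep f c).trace = ∑ i, (permRep f (c i i)).trace := by
    simp only [Matrix.trace, Matrix.diag_apply, Fintype.sum_prod_type, permMatRep_apply]
  simp only [matTrace, htrace, Finset.sum_div, trace_permRep_div_card]

open scoped Matrix.Norms.Operator

theorem nnnorm_permMatrix_le_one (σ : Equiv.Perm ι) : ‖σ.permMatrix ℂ‖₊ ≤ 1 := by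
  rw [Matrix.linfty_opNNNorm_def]
  refine Finset.sup_le fun s _ => le_of_eq ?_
  simp [Equiv.Perm.permMatrix, PEquiv.toMatrix_apply, apply_ite]

theorem nnnorm_permRep_le (f : G →* Equiv.Perm ι) (x : MonoidAlgebra ℂ G) :
    ‖permRep f x‖₊ ≤ x.coeff.sum fun _ z => ‖z‖₊ := by
  rw [permRep_apply]
  refine (nnnorm_sum_le _ _).trans (Finset.sum_le_sum fun g _ => ?_)
  exact (nnnorm_smul_le _ _).trans (mul_le_of_le_one_right' (nnnorm_permMatrix_le_one _))

theorem nnnorm_permMatRep_le (f : G →* Equiv.Perm ι) (a : Matrix m m (MonoidAlgebra ℂ G)) :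
    ‖permMatRep f a‖₊ ≤ ∑ i, ∑ j, (a i j).coeff.sum fun _ z => ‖z‖₊ :=
  (nnnorm_comp_le ((permRep f).mapMatrix a)).trans
    (Finset.sum_le_sum fun i _ => Finset.sum_le_sum fun j _ => nnnorm_permRep_le f (a i j))

theorem re_matTrace_permFixRatio_aeval_nonneg {k : ℕ} (f : G →* Equiv.Perm (Fin k))
    {a : Matrix m m (MonoidAlgebra ℂ G)} (ha : ∀ i j, HasIntCoeffs (a i j)) {K : ℝ}
    (hK : ‖permMatRep f (aᴴ * a)‖ ≤ K) {p : Polynomial ℝ}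
    (hp : ∀ t ∈ Set.Icc 0 K, Real.log t / 2 ≤ p.eval t) :
    0 ≤ (matTrace (fun g => (permFixRatio (f g) : ℂ)) (Polynomial.aeval (aᴴ * a) p)).re := by
  obtain ⟨A, hA⟩ := exists_permMatRep_eq_map_intCast ha f
  have hAA : permMatRep f (aᴴ * a) = (A.map Int.cast)ᴴ * A.map Int.cast := by
    rw [map_mul, permMatRep_conjTranspose, hA]
  have haeval : permMatRep f (Polynomial.aeval (aᴴ * a) p) =
      Polynomial.aeval (permMatRep f (aᴴ * a)) p :=
    (Polynomial.aeval_algHom_apply ((permMatRep f).restrictScalars ℝ) _ p).symm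
  rw [matTrace_permFixRatio, haeval, hAA, Complex.div_natCast_re]
  exact div_nonneg (re_trace_aeval_conjTranspose_mul_self_nonneg A (hAA ▸ hK) hp) k.cast_nonneg

end PermutationRepresentation

section PermTraceLimit

variable {G : Type*} [Group G]

/-- `φ` is a pointwise limit of the normalized characters of actions of `G` on nonempty finite
sets. -/
def IsPermTraceLimit (φ : G → ℂ) : Prop :=
  ∃ (k : ℕ → ℕ) (f : ∀ n, G →* Equiv.Perm (Fin (k n))), (∀ n, 0 < k n) ∧
    ∀ g, Tendsto (fun n => (permFixRatio (f n g) : ℂ)) atTop (𝓝 (φ g))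

theorem IsPermTraceLimit.exists_re_matTrace_aeval_nonneg {φ : G → ℂ} (h : IsPermTraceLimit φ)
    {m : Type*} [Fintype m] [DecidableEq m] {a : Matrix m m (MonoidAlgebra ℂ G)}
    (ha : ∀ i j, HasIntCoeffs (a i j)) :
    ∃ K₀ : ℝ, ∀ K ≥ K₀, ∀ p : Polynomial ℝ, (∀ t ∈ Set.Icc 0 K, Real.log t / 2 ≤ p.eval t) →
      0 ≤ (matTrace φ (Polynomial.aeval (aᴴ * a) p)).re := by
  obtain ⟨k, f, -, hf⟩ := h
  refine ⟨((∑ i, ∑ j, ((aᴴ * a) i j).coeff.sum fun _ z => ‖z‖₊ : NNReal) : ℝ),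
    fun K hK p hp => ?_⟩
  have hlim := (Complex.continuous_re.tendsto _).comp
    (tendsto_matTrace hf (Polynomial.aeval (aᴴ * a) p))
  exact ge_of_tendsto' hlim fun n => re_matTrace_permFixRatio_aeval_nonneg (f n) ha
    ((NNReal.coe_le_coe.2 (nnnorm_permMatRep_le (f n) _)).trans hK) hp

theorem IsPermTraceLimit.satisfiesLueck {φ : G → ℂ} (h : IsPermTraceLimit φ) :
    SatisfiesLueck φ := by
  intro n _ a ha R
  refine le_iInf₂ fun g ⟨hgc, hg⟩ => EReal.coe_nonneg.2 ?_
  change 0 ≤ (R.vecTrace _).re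
  set T := matAct R.π a
  have hTT : matAct R.π (aᴴ * a) = star T * T := by
    rw [matAct_mul, matAct_conjTranspose R.π R.π_star]
  obtain ⟨K₀, hK₀⟩ := h.exists_re_matTrace_aeval_nonneg ha
  set K := max K₀ ‖star T * T‖
  have hspec : spectrum ℝ (star T * T) ⊆ Set.Icc 0 K :=
    (spectrum_star_mul_self_subset_Icc T).trans (Set.Icc_subset_Icc_right (le_max_right _ _))
  have hcont : ContinuousOn (g ∘ Real.sqrt) (Set.Icc 0 K) :=
    hgc.comp (by fun_prop) fun t _ => Real.sqrt_nonneg t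
  have hlog : ∀ t ∈ Set.Icc 0 K, Real.log t / 2 ≤ g √t := fun t ht =>
    Real.log_sqrt ht.1 ▸ hg √t (Real.sqrt_nonneg t)
  have hclosed : IsClosed {S | 0 ≤ (R.vecTrace (n := n) S).re} :=
    isClosed_le continuous_const (Complex.continuous_re.comp R.continuous_vecTrace)
  rw [cfc_cfcAbs hgc]
  refine closure_minimal ?_ hclosed
    (cfc_mem_closure_aeval_majorants (.star_mul_self T) hspec hcont)
  rintro _ ⟨p, hp, rfl⟩
  rw [Set.mem_ofPred_eq, ← hTT, ← matAct_aeval, R.vecTrace_matAct]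
  exact hK₀ K (le_max_left _ _) p fun t ht => (hlog t ht).trans (hp t ht)

end PermTraceLimit

section Quotient

variable {F G : Type*} [Group F] [Group G] {φ : G → ℂ}

theorem mapDomainAlgHom_mapDomain_surjInv {q : F →* G} (hq : Function.Surjective q)
    (x : MonoidAlgebra ℂ G) :
    MonoidAlgebra.mapDomainAlgHom ℂ ℂ q (MonoidAlgebra.mapDomain (Function.surjInv hq) x) = x := by
  ext1
  simp [← Finsupp.mapDomain_comp, (Function.rightInverse_surjInv hq).comp_eq_id]

/-- The GNS representation of `φ ∘ q` obtained from one of `φ` by pulling back along a surjective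
homomorphism `q`: the Hilbert space and the cyclic vector are unchanged. -/
def GNSRep.comap (R : GNSRep G φ) (q : F →* G) (hq : Function.Surjective q) :
    GNSRep F (φ ∘ q) where
  H := R.H
  π := R.π.comp (MonoidAlgebra.mapDomainAlgHom ℂ ℂ q)
  ξ := R.ξ
  star_of g := by simpa using R.star_of (q g)
  inner_eq g := by simpa using R.inner_eq (q g)
  cyclic := by
    have hsurj : Function.Surjective (MonoidAlgebra.mapDomainAlgHom ℂ ℂ q) :=
      fun x => ⟨_, mapDomainAlgHom_mapDomain_surjInv hq x⟩
    exact (hsurj.range_comp fun x => R.π x R.ξ).symm ▸ R.cyclic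

theorem GNSRep.lnPlusQ_comap (R : GNSRep G φ) {q : F →* G} (hq : Function.Surjective q) {n : ℕ}
    (a : Matrix (Fin n) (Fin n) (MonoidAlgebra ℂ F)) :
    (R.comap q hq).lnPlusQ a = R.lnPlusQ (a.map (MonoidAlgebra.mapDomainAlgHom ℂ ℂ q)) :=
  rfl

theorem HasIntCoeffs.exists_mapDomain_eq {x : MonoidAlgebra ℂ G} (hx : HasIntCoeffs x)
    {q : F →* G} (hq : Function.Surjective q) :
    ∃ y : MonoidAlgebra ℂ F, HasIntCoeffs y ∧ MonoidAlgebra.mapDomainAlgHom ℂ ℂ q y = x := by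
  refine ⟨_, fun g => ?_, mapDomainAlgHom_mapDomain_surjInv hq x⟩
  rw [MonoidAlgebra.coeff_mapDomain]
  by_cases hg : g ∈ Set.range (Function.surjInv hq)
  · obtain ⟨g, rfl⟩ := hg
    exact Finsupp.mapDomain_apply (Function.injective_surjInv hq) x.coeff g ▸ hx g
  · exact ⟨0, by rw [Finsupp.mapDomain_of_notMem_range _ _ hg, Int.cast_zero]⟩

theorem SatisfiesLueck.of_comp_surjective {q : F →* G} (hq : Function.Surjective q)
    (h : SatisfiesLueck (φ ∘ q)) : SatisfiesLueck φ := by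
  intro n hn a ha R
  choose b hb hba using fun i j => HasIntCoeffs.exists_mapDomain_eq (ha i j) hq
  have hmap : (Matrix.of b).map (MonoidAlgebra.mapDomainAlgHom ℂ ℂ q) = a := Matrix.ext hba
  rw [← hmap, ← R.lnPlusQ_comap hq]
  exact h n hn _ hb _

end Quotient

section Hamming

variable {k : ℕ}

theorem permHamming_eq_hammingDist_div (σ τ : Equiv.Perm (Fin k)) :
    permHamming σ τ = hammingDist ⇑σ ⇑τ / k :=
  rfl

theorem permHamming_nonneg (σ τ : Equiv.Perm (Fin k)) : 0 ≤ permHamming σ τ := by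
  rw [permHamming_eq_hammingDist_div]
  positivity

theorem permHamming_comm (σ τ : Equiv.Perm (Fin k)) : permHamming σ τ = permHamming τ σ := by
  simp only [permHamming_eq_hammingDist_div, hammingDist_comm]

theorem permHamming_triangle (ρ σ τ : Equiv.Perm (Fin k)) :
    permHamming ρ τ ≤ permHamming ρ σ + permHamming σ τ := by
  simp only [permHamming_eq_hammingDist_div, ← add_div]
  gcongr
  exact_mod_cast hammingDist_triangle ⇑ρ ⇑σ ⇑τ

theorem permHamming_mul_left (ρ σ τ : Equiv.Perm (Fin k)) :
    permHamming (ρ * σ) (ρ * τ) = permHamming σ τ := by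
  simp [permHamming]

theorem permHamming_mul_right (σ τ ρ : Equiv.Perm (Fin k)) :
    permHamming (σ * ρ) (τ * ρ) = permHamming σ τ := by
  unfold permHamming
  congr 2
  exact Finset.card_equiv ρ fun x => by
    rw [Finset.mem_filter_univ, Finset.mem_filter_univ, Equiv.Perm.mul_apply, Equiv.Perm.mul_apply]

theorem permHamming_inv_mul_one (σ τ : Equiv.Perm (Fin k)) :
    permHamming (σ⁻¹ * τ) 1 = permHamming σ τ := by
  rw [← permHamming_mul_left σ, mul_inv_cancel_left, mul_one, permHamming_comm]

theorem permHamming_mul_one_le (σ τ : Equiv.Perm (Fin k)) :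
    permHamming (σ * τ) 1 ≤ permHamming σ 1 + permHamming τ 1 :=
  calc
    permHamming (σ * τ) 1 ≤ permHamming (σ * τ) (1 * τ) + permHamming (1 * τ) 1 :=
      permHamming_triangle _ _ _
    _ = permHamming σ 1 + permHamming τ 1 := by rw [permHamming_mul_right, one_mul]

theorem permHamming_conj_one (σ τ : Equiv.Perm (Fin k)) :
    permHamming (τ * σ * τ⁻¹) 1 = permHamming σ 1 := by
  rw [← permHamming_mul_right _ 1 τ, inv_mul_cancel_right, one_mul]
  simpa using permHamming_mul_left τ σ 1

theorem permFixRatio_eq_one_sub_permHamming (hk : 0 < k) (σ : Equiv.Perm (Fin k)) :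
    permFixRatio σ = 1 - permHamming σ 1 := by
  have hcard := Finset.card_filter_add_card_filter_not (s := Finset.univ) fun x => σ x = x
  rw [Finset.card_univ, Fintype.card_fin] at hcard
  have hk' : (k : ℝ) ≠ 0 := by positivity
  rw [permFixRatio, permHamming, eq_sub_iff_add_eq, ← add_div, div_eq_one_iff_eq hk']
  exact_mod_cast hcard

theorem abs_permFixRatio_sub_le (hk : 0 < k) (σ τ : Equiv.Perm (Fin k)) :
    |permFixRatio σ - permFixRatio τ| ≤ permHamming σ τ := by
  rw [permFixRatio_eq_one_sub_permHamming hk, permFixRatio_eq_one_sub_permHamming hk, abs_le]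
  have hστ := permHamming_triangle σ τ 1
  have hτσ := permHamming_triangle τ σ 1
  rw [permHamming_comm τ σ] at hτσ
  constructor <;> linarith

end Hamming

section SoficLimit

/-- The normal subgroup of sequences of permutations that are asymptotically trivial for the
Hamming distance. Modulo it, an asymptotically multiplicative sequence of maps into `S_{k n}` is an
honest homomorphism. -/
def nullPerms (k : ℕ → ℕ) : Subgroup (∀ n, Equiv.Perm (Fin (k n))) where
  carrier := {σ | Tendsto (fun n => permHamming (σ n) 1) atTop (𝓝 0)}
  one_mem' := by simp [permHamming]
  mul_mem' {σ τ} hσ hτ := squeeze_zero (fun n => permHamming_nonneg _ _)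
    (fun n => permHamming_mul_one_le (σ n) (τ n)) (add_zero (0 : ℝ) ▸ hσ.add hτ)
  inv_mem' {σ} hσ := hσ.congr fun n => by
    rw [Pi.inv_apply, ← mul_one (σ n)⁻¹, permHamming_inv_mul_one]

instance nullPerms_normal (k : ℕ → ℕ) : (nullPerms k).Normal where
  conj_mem _ hσ τ := hσ.congr fun n => (permHamming_conj_one _ (τ n)).symm

theorem mk_eq_mk_iff_tendsto_permHamming {k : ℕ → ℕ} {σ τ : ∀ n, Equiv.Perm (Fin (k n))} :
    (σ : (∀ n, Equiv.Perm (Fin (k n))) ⧸ nullPerms k) = τ ↔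
      Tendsto (fun n => permHamming (σ n) (τ n)) atTop (𝓝 0) :=
  QuotientGroup.eq.trans <|
    tendsto_congr fun n => permHamming_inv_mul_one (σ n) (τ n)

variable {Γ : Type*} [Group Γ] {k : ℕ → ℕ} {f : ∀ n, Γ → Equiv.Perm (Fin (k n))}

theorem tendsto_permHamming_freeGroup_lift
    (hmul : ∀ x y, Tendsto (fun n => permHamming (f n x * f n y) (f n (x * y))) atTop (𝓝 0))
    (w : FreeGroup Γ) :
    Tendsto (fun n => permHamming (FreeGroup.lift (f n) w) (f n (FreeGroup.lift id w))) atTop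
      (𝓝 0) := by
  let F : Γ →* (∀ n, Equiv.Perm (Fin (k n))) ⧸ nullPerms k :=
    MonoidHom.mk' (fun x => QuotientGroup.mk' (nullPerms k) fun n => f n x)
      fun x y => (mk_eq_mk_iff_tendsto_permHamming.2 (hmul x y)).symm
  have hlift : (QuotientGroup.mk' (nullPerms k)).comp (MonoidHom.pi fun n => FreeGroup.lift (f n)) =
      F.comp (FreeGroup.lift id) := by
    ext x
    have hgen : (fun n => FreeGroup.lift (f n) (.of x)) = fun n => f n x :=
      funext fun _ => FreeGroup.lift_apply_of
    rw [MonoidHom.comp_apply, MonoidHom.comp_apply, FreeGroup.lift_apply_of]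
    exact congrArg (QuotientGroup.mk' (nullPerms k)) hgen
  exact mk_eq_mk_iff_tendsto_permHamming.1 (DFunLike.congr_fun hlift w)

theorem tendsto_permFixRatio_canonicalTrace (hk : ∀ n, 0 < k n)
    (hmul : ∀ x y, Tendsto (fun n => permHamming (f n x * f n y) (f n (x * y))) atTop (𝓝 0))
    (hfree : ∀ x, x ≠ 1 → Tendsto (fun n => permHamming (f n x) 1) atTop (𝓝 1)) (x : Γ) :
    Tendsto (fun n => (permFixRatio (f n x) : ℂ)) atTop (𝓝 (canonicalTrace Γ x)) := by
  simp only [permFixRatio_eq_one_sub_permHamming (hk _), Complex.ofReal_sub, Complex.ofReal_one]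
  rcases eq_or_ne x 1 with rfl | hx
  · have hone : Tendsto (fun n => permHamming (f n 1) 1) atTop (𝓝 0) :=
      (hmul 1 1).congr fun n => by
        simpa using permHamming_mul_left (f n 1) (f n 1) 1
    simpa [canonicalTrace] using hone.ofReal.const_sub 1
  · simpa [canonicalTrace, hx] using (hfree x hx).ofReal.const_sub 1

theorem IsSofic.isPermTraceLimit (h : IsSofic Γ) :
    IsPermTraceLimit (canonicalTrace Γ ∘ (FreeGroup.lift id : FreeGroup Γ →* Γ)) := by
  obtain ⟨k, f, hk, hmul, hfree⟩ := h
  refine ⟨k, fun n => FreeGroup.lift (f n), hk, fun w => ?_⟩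
  refine (tendsto_permFixRatio_canonicalTrace hk hmul hfree (FreeGroup.lift id w)).congr_dist ?_
  refine squeeze_zero (fun n => dist_nonneg) (fun n => ?_)
    (tendsto_permHamming_freeGroup_lift hmul w)
  rw [Complex.isometry_ofReal.dist_eq, dist_comm]
  exact abs_permFixRatio_sub_le (hk n) _ _

end SoficLimit

theorem stmt11_general {Γ : Type*} [Group Γ] (h : IsSofic Γ) :
    SatisfiesLueck (canonicalTrace Γ) :=
  h.isPermTraceLimit.satisfiesLueck.of_comp_surjective fun x => ⟨.of x, FreeGroup.lift_apply_of⟩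

/-- Elek–Szabó: every countable sofic group satisfies Lück's determinant
conjecture: its canonical trace satisfies Lück's condition. -/
theorem stmt11 {Γ : Type*} [Group Γ] [Countable Γ] (h : IsSofic Γ) :
    SatisfiesLueck (canonicalTrace Γ) :=
  stmt11_general h

end
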